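/- arXiv:1003.5615 — 4 statements merged into one kernel-verified Lean document; each statement's English description precedes it below -/
import Mathlib

section
/- Let n ≥ 2 be an integer, k > 0 and λ ∈ ℝ. Suppose w : ℝ → ℝ is twice continuously differentiable on (0,1) and satisfies the radial hypergeometric equation E(n, λ/k) on (0,1). Then the function f(r) := w(sin²(√k·r/2)) satisfies f''(r) + (n−1)·√k·cot(√k·r)·f'(r) − (k(n−1)/4)·(sec²(√k·r/2) + n − 1)·f(r) = −λ·f(r) for every r ∈ (0, π/√k). -/
open Real Set

/-- A function `w` satisfies the radial hypergeometric equation `E(n, τ)` on the set `I`: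
`z(1−z)w'' + (n/2 − nz)w' − (((n−1)/4)(n−1+1/(1−z)) − τ)w = 0` on `I`. -/
def SatisfiesRadialHG (n : ℕ) (τ : ℝ) (w : ℝ → ℝ) (I : Set ℝ) : Prop :=
  ∀ z ∈ I, z * (1 - z) * deriv (deriv w) z + ((n : ℝ) / 2 - n * z) * deriv w z
    - (((n : ℝ) - 1) / 4 * ((n : ℝ) - 1 + 1 / (1 - z)) - τ) * w z = 0

/-!
The substitution `z = sin² (a r / 2) = (1 - cos (a r)) / 2` satisfies `z' = (a / 2) sin (a r)` and
`z'' = (a² / 2) cos (a r)`, hence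
`z'² = a² z (1 - z)`, `z'' + (ν - 1) a cot (a r) z' = a² (ν / 2 - ν z)` and
`sec² (a r / 2) = 1 / (1 - z)`. By the chain rule it therefore carries the radial operator in `r` to
`a²` times the hypergeometric operator in `z`, so eigenfunctions correspond to eigenfunctions.
-/

theorem sin_half_sq (θ : ℝ) : sin (θ / 2) ^ 2 = (1 - cos θ) / 2 := by
  rw [sin_sq_eq_half_sub, mul_div_cancel₀ θ two_ne_zero]
  ring

theorem sin_half_sq_mem_Ioo {θ : ℝ} (hθ : sin θ ≠ 0) : sin (θ / 2) ^ 2 ∈ Ioo 0 1 := by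
  have cos_sq_lt_one : cos θ ^ 2 < 1 := by
    rw [cos_sq']
    exact sub_lt_self 1 (by positivity)
  have ⟨_, _⟩ := abs_lt.mp ((sq_lt_one_iff_abs_lt_one _).mp cos_sq_lt_one)
  rw [sin_half_sq]
  constructor <;> linarith

theorem hasDerivAt_sin_half_sq (a x : ℝ) :
    HasDerivAt (fun y ↦ sin (a * y / 2) ^ 2) (a / 2 * sin (a * x)) x := by
  simp only [sin_half_sq]
  refine ((((hasDerivAt_const_mul a).cos).const_sub 1).div_const 2).congr_deriv ?_
  ring

theorem deriv_sin_half_sq (a : ℝ) :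
    deriv (fun y ↦ sin (a * y / 2) ^ 2) = fun x ↦ a / 2 * sin (a * x) :=
  funext fun x ↦ (hasDerivAt_sin_half_sq a x).deriv

theorem hasDerivAt_deriv_sin_half_sq (a x : ℝ) :
    HasDerivAt (deriv fun y ↦ sin (a * y / 2) ^ 2) (a ^ 2 / 2 * cos (a * x)) x := by
  rw [deriv_sin_half_sq]
  refine ((hasDerivAt_const_mul a).sin.const_mul (a / 2)).congr_deriv ?_
  ring

theorem deriv_comp_sin_half_sq {a r : ℝ} {w : ℝ → ℝ}
    (hw : DifferentiableAt ℝ w (sin (a * r / 2) ^ 2)) :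
    deriv (fun x ↦ w (sin (a * x / 2) ^ 2)) r =
      deriv w (sin (a * r / 2) ^ 2) * (a / 2 * sin (a * r)) :=
  (hw.hasDerivAt.comp r (hasDerivAt_sin_half_sq a r)).deriv

theorem deriv_deriv_comp_sin_half_sq {a r : ℝ} {w : ℝ → ℝ}
    (hw : ContDiffAt ℝ 2 w (sin (a * r / 2) ^ 2)) :
    deriv (deriv fun x ↦ w (sin (a * x / 2) ^ 2)) r =
      deriv (deriv w) (sin (a * r / 2) ^ 2) * (a / 2 * sin (a * r)) ^ 2
        + deriv w (sin (a * r / 2) ^ 2) * (a ^ 2 / 2 * cos (a * r)) := by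
  have chain_rule := iteratedDeriv_comp_two hw (f := fun x ↦ sin (a * x / 2) ^ 2) (by fun_prop)
  simp only [iteratedDeriv_succ, iteratedDeriv_zero] at chain_rule
  rwa [(hasDerivAt_deriv_sin_half_sq a r).deriv, deriv_sin_half_sq] at chain_rule

/-- The differential operator whose eigenvalue equation at `-τ` is the radial hypergeometric
equation `E(ν, τ)`, with a real parameter `ν` in place of the dimension. -/
noncomputable def radialHGOperator (ν : ℝ) (w : ℝ → ℝ) (z : ℝ) : ℝ :=
  z * (1 - z) * deriv (deriv w) z + (ν / 2 - ν * z) * deriv w z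
    - (ν - 1) / 4 * (ν - 1 + 1 / (1 - z)) * w z

theorem satisfiesRadialHG_iff {n : ℕ} {τ : ℝ} {w : ℝ → ℝ} {I : Set ℝ} :
    SatisfiesRadialHG n τ w I ↔ ∀ z ∈ I, radialHGOperator n w z = -τ * w z := by
  refine forall₂_congr fun z _ ↦ ?_
  rw [radialHGOperator]
  constructor <;> intro h <;> linear_combination h

/-- The radial Laplacian on the `ν`-dimensional sphere of curvature `a²`, where `r` is the distance
to the pole, minus the potential `(a² (ν - 1) / 4) (sec² (a r / 2) + ν - 1)`. -/
noncomputable def sphericalRadialOperator (ν a : ℝ) (f : ℝ → ℝ) (r : ℝ) : ℝ :=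
  deriv (deriv f) r + (ν - 1) * a * cot (a * r) * deriv f r
    - a ^ 2 * (ν - 1) / 4 * ((cos (a * r / 2))⁻¹ ^ 2 + ν - 1) * f r

theorem sphericalRadialOperator_comp_sin_half_sq (ν : ℝ) {a r : ℝ} {w : ℝ → ℝ}
    (hw : ContDiffAt ℝ 2 w (sin (a * r / 2) ^ 2)) (hr : sin (a * r) ≠ 0) :
    sphericalRadialOperator ν a (fun x ↦ w (sin (a * x / 2) ^ 2)) r =
      a ^ 2 * radialHGOperator ν w (sin (a * r / 2) ^ 2) := by
  have deriv_sq :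
      (a / 2 * sin (a * r)) ^ 2 = a ^ 2 * (sin (a * r / 2) ^ 2 * (1 - sin (a * r / 2) ^ 2)) := by
    rw [sin_half_sq, mul_pow, sin_sq]
    ring
  have first_order :
      a ^ 2 / 2 * cos (a * r) + (ν - 1) * a * cot (a * r) * (a / 2 * sin (a * r)) =
        a ^ 2 * (ν / 2 - ν * sin (a * r / 2) ^ 2) := by
    rw [sin_half_sq, cot_eq_cos_div_sin]
    field_simp
    ring
  have sec_sq : (cos (a * r / 2))⁻¹ ^ 2 = 1 / (1 - sin (a * r / 2) ^ 2) := by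
    rw [inv_pow, cos_sq', one_div]
  rw [sphericalRadialOperator, deriv_deriv_comp_sin_half_sq hw,
    deriv_comp_sin_half_sq (hw.differentiableAt two_ne_zero), sec_sq, radialHGOperator]
  linear_combination deriv (deriv w) (sin (a * r / 2) ^ 2) * deriv_sq
    + deriv w (sin (a * r / 2) ^ 2) * first_order

theorem radial_substitution_general (ν : ℝ) {k : ℝ} (hk : 0 < k) (lam : ℝ) {w : ℝ → ℝ}
    (hw : ContDiffOn ℝ 2 w (Ioo 0 1))
    (hE : ∀ z ∈ Ioo 0 1, radialHGOperator ν w z = -(lam / k) * w z)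
    {r : ℝ} (hr : sin (√k * r) ≠ 0) :
    sphericalRadialOperator ν √k (fun x ↦ w (sin (√k * x / 2) ^ 2)) r =
      -lam * w (sin (√k * r / 2) ^ 2) := by
  have hz := sin_half_sq_mem_Ioo hr
  rw [sphericalRadialOperator_comp_sin_half_sq ν (hw.contDiffAt (isOpen_Ioo.mem_nhds hz)) hr,
    hE _ hz, sq_sqrt hk.le]
  field_simp

theorem radial_substitution (n : ℕ) (hn : 2 ≤ n) (k : ℝ) (hk : 0 < k) (lam : ℝ)
    (w : ℝ → ℝ) (hw : ContDiffOn ℝ 2 w (Ioo 0 1))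
    (hE : SatisfiesRadialHG n (lam / k) w (Ioo 0 1))
    (f : ℝ → ℝ) (hf : ∀ r, f r = w (Real.sin (Real.sqrt k * r / 2) ^ 2)) :
    ∀ r ∈ Ioo 0 (π / Real.sqrt k),
      deriv (deriv f) r
        + ((n : ℝ) - 1) * Real.sqrt k * Real.cot (Real.sqrt k * r) * deriv f r
        - k * ((n : ℝ) - 1) / 4
            * ((Real.cos (Real.sqrt k * r / 2))⁻¹ ^ 2 + (n : ℝ) - 1) * f r
      = -lam * f r := by
  intro r hr
  obtain rfl : f = fun x ↦ w (sin (√k * x / 2) ^ 2) := funext hf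
  have angle_pos : 0 < √k * r := mul_pos (sqrt_pos.mpr hk) hr.1
  have angle_lt_pi : √k * r < π := (lt_div_iff₀' (sqrt_pos.mpr hk)).mp hr.2
  simpa only [sphericalRadialOperator, sq_sqrt hk.le] using
    radial_substitution_general n hk lam hw (satisfiesRadialHG_iff.mp hE)
      (sin_pos_of_pos_of_lt_pi angle_pos angle_lt_pi).ne'
end

section
/- Let n ≥ 2 be an integer and j ∈ ℕ. The function w(z) := √(1−z) · ₂F₁(n+j, −j, n/2; z) (a polynomial multiple of √(1−z), since the hypergeometric series terminates) satisfies the radial hypergeometric equation E(n, (n/2 + j)²) on the interval (0,1). -/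
open Real Set

/-!
Gauss's equation for `f = ₂F₁ a b c` is the recurrence
`(m + 1) (c + m) u (m + 1) = (a + m) (b + m) u m` of the coefficients of its power series.
Conjugation by `√(1 - z)` turns the radial operator of `E(n, τ)` into Gauss's operator with
`a + b = n`, `c = n / 2` and `a * b = n² / 4 - τ`; for `a = n + ν`, `b = -ν` the last equation reads
`τ = (n / 2 + ν)²`.
-/

open FormalMultilinearSeries Topology

section PowerSeries

theorem hasSum_mul_pow_of_succ {R : Type*} [CommRing R] [TopologicalSpace R]
    [IsTopologicalRing R] {v : ℕ → R} {z s : R} (h₀ : v 0 = 0)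
    (h : HasSum (fun m ↦ v (m + 1) * z ^ m) s) : HasSum (fun m ↦ v m * z ^ m) (z * s) := by
  have h_succ : HasSum (fun m ↦ v (m + 1) * z ^ (m + 1)) (z * s) :=
    (h.mul_left z).congr_fun fun m ↦ by ring
  rw [← hasSum_nat_add_iff' 1]
  simpa [h₀] using h_succ

variable {𝕜 : Type*} [NontriviallyNormedField 𝕜] {f : 𝕜 → 𝕜} {u : ℕ → 𝕜} {r : ENNReal} {z : 𝕜}

theorem hasSum_of_hasFPowerSeriesOnBall_ofScalars
    (h : HasFPowerSeriesOnBall f (ofScalars 𝕜 u) 0 r) (hz : z ∈ Metric.eball 0 r) :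
    HasSum (fun m ↦ u m * z ^ m) (f z) := by
  simpa only [ofScalars_apply_eq, smul_eq_mul, zero_add] using h.hasSum hz

variable [CompleteSpace 𝕜]

theorem hasFPowerSeriesOnBall_deriv_ofScalars
    (h : HasFPowerSeriesOnBall f (ofScalars 𝕜 u) 0 r) :
    HasFPowerSeriesOnBall (deriv f) (ofScalars 𝕜 fun m ↦ (m + 1) * u (m + 1)) 0 r := by
  convert! (ContinuousLinearMap.apply 𝕜 𝕜 (1 : 𝕜)).comp_hasFPowerSeriesOnBall h.fderiv using 1
  ext m
  simp [derivSeries_coeff_one]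

theorem hasSum_mul_deriv_of_hasFPowerSeriesOnBall_ofScalars
    (h : HasFPowerSeriesOnBall f (ofScalars 𝕜 u) 0 r) (hz : z ∈ Metric.eball 0 r) :
    HasSum (fun m ↦ m * u m * z ^ m) (z * deriv f z) := by
  refine hasSum_mul_pow_of_succ (by simp) ?_
  simpa using hasSum_of_hasFPowerSeriesOnBall_ofScalars
    (hasFPowerSeriesOnBall_deriv_ofScalars h) hz

end PowerSeries

section Gauss

theorem ordinaryHypergeometricCoefficient_succ {𝕂 : Type*} [Field 𝕂] [CharZero 𝕂] (a b : 𝕂)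
    {c : 𝕂} {m : ℕ} (hc : c + m ≠ 0) :
    (m + 1) * (c + m) * ordinaryHypergeometricCoefficient a b c (m + 1) =
      (a + m) * (b + m) * ordinaryHypergeometricCoefficient a b c m := by
  have hm : (m : 𝕂) + 1 ≠ 0 := m.cast_add_one_ne_zero
  simp only [ordinaryHypergeometricCoefficient, ascPochhammer_succ_eval, Nat.factorial_succ,
    Nat.cast_mul, Nat.cast_add_one, mul_inv]
  field_simp

theorem one_le_radius_ordinaryHypergeometricSeries {𝕂 : Type*} (𝔸 : Type*) [RCLike 𝕂]
    [NormedDivisionRing 𝔸] [NormedAlgebra 𝕂 𝔸] (a b c : 𝕂) :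
    1 ≤ (ordinaryHypergeometricSeries 𝔸 a b c).radius := by
  by_cases! h : ∀ k : ℕ, (k : 𝕂) ≠ -a ∧ (k : 𝕂) ≠ -b ∧ (k : 𝕂) ≠ -c
  · exact (ordinaryHypergeometricSeries_radius_eq_one 𝔸 a b c h).ge
  · obtain ⟨k, hk⟩ := h
    have h_top : (ordinaryHypergeometricSeries 𝔸 a b c).radius = ⊤ :=
      radius_eq_top_of_forall_image_add_eq_zero _ (k + 1) fun m ↦
        ordinaryHypergeometricSeries_eq_zero_of_neg_nat a b c (k := k) (by tauto) (by lia)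
    exact h_top ▸ le_top

variable {𝕜 : Type*} [NontriviallyNormedField 𝕜] [CompleteSpace 𝕜]

theorem hasFPowerSeriesOnBall_ordinaryHypergeometric {a b c : 𝕜}
    (h : 0 < (ordinaryHypergeometricSeries 𝕜 a b c).radius) :
    HasFPowerSeriesOnBall (₂F₁ a b c) (ordinaryHypergeometricSeries 𝕜 a b c) 0
      (ordinaryHypergeometricSeries 𝕜 a b c).radius :=
  (ordinaryHypergeometricSeries 𝕜 a b c).hasFPowerSeriesOnBall h

theorem ordinaryHypergeometric_gauss_equation [CharZero 𝕜] (a b : 𝕜) {c z : 𝕜}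
    (hc : ∀ m : ℕ, c + m ≠ 0)
    (hz : z ∈ Metric.eball 0 (ordinaryHypergeometricSeries 𝕜 a b c).radius) :
    z * (1 - z) * deriv (deriv (₂F₁ a b c)) z + (c - (a + b + 1) * z) * deriv (₂F₁ a b c) z
      - a * b * ₂F₁ a b c z = 0 := by
  let u := ordinaryHypergeometricCoefficient a b c
  have hF : HasFPowerSeriesOnBall (₂F₁ a b c) (ofScalars 𝕜 u) 0 _ :=
    hasFPowerSeriesOnBall_ordinaryHypergeometric (Metric.pos_of_mem_eball hz)
  have hF' := hasFPowerSeriesOnBall_deriv_ofScalars hF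
  have h_f := hasSum_of_hasFPowerSeriesOnBall_ofScalars hF hz
  have h_f' := hasSum_of_hasFPowerSeriesOnBall_ofScalars hF' hz
  have h_zf' := hasSum_mul_deriv_of_hasFPowerSeriesOnBall_ofScalars hF hz
  have h_zf'' := hasSum_mul_deriv_of_hasFPowerSeriesOnBall_ofScalars hF' hz
  have h_zzf'' : HasSum (fun m : ℕ ↦ (m - 1) * m * u m * z ^ m)
      (z * (z * deriv (deriv (₂F₁ a b c)) z)) :=
    hasSum_mul_pow_of_succ (by simp) (h_zf''.congr_fun fun m ↦ by push_cast; ring)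
  have h_sum := (((h_zf''.sub h_zzf'').add (h_f'.mul_left c)).sub
    (h_zf'.mul_left (a + b + 1))).sub (h_f.mul_left (a * b))
  have h_zero := h_sum.unique <| hasSum_zero.congr_fun fun m ↦ by
    linear_combination z ^ m * ordinaryHypergeometricCoefficient_succ a b (hc m)
  linear_combination h_zero

end Gauss

section SqrtConjugation

theorem iteratedDeriv_two_sqrt {x : ℝ} (hx : 0 < x) :
    iteratedDeriv 2 (√·) x = -1 / (4 * √x ^ 3) := by
  have h_deriv : deriv (√·) =ᶠ[𝓝 x] fun y ↦ (2 * √y)⁻¹ := by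
    filter_upwards [eventually_ne_nhds hx.ne'] with y hy
    rw [(hasDerivAt_sqrt hy).deriv, one_div]
  have hs : √x ≠ 0 := (sqrt_pos.2 hx).ne'
  rw [iteratedDeriv_succ, iteratedDeriv_one, h_deriv.deriv_eq,
    (((hasDerivAt_sqrt hx.ne').const_mul 2).fun_inv (by positivity)).deriv]
  field_simp
  norm_num

variable {f : ℝ → ℝ} {z : ℝ}

theorem deriv_sqrt_one_sub_mul (hz : z < 1) (hf : DifferentiableAt ℝ f z) :
    deriv (fun x ↦ √(1 - x) * f x) z = √(1 - z) * deriv f z - f z / (2 * √(1 - z)) := by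
  have h_sqrt := ((hasDerivAt_id' z).const_sub 1).sqrt (sub_pos.2 hz).ne'
  rw [(h_sqrt.fun_mul hf.hasDerivAt).deriv]
  ring

theorem deriv_deriv_sqrt_one_sub_mul (hz : z < 1) (hf : ContDiffAt ℝ 2 f z) :
    deriv (deriv fun x ↦ √(1 - x) * f x) z =
      √(1 - z) * deriv (deriv f) z - deriv f z / √(1 - z) - f z / (4 * √(1 - z) ^ 3) := by
  have hz' : 0 < 1 - z := sub_pos.2 hz
  have h_smooth : ContDiffAt ℝ 2 (fun x ↦ √(1 - x)) z :=
    (contDiffAt_const.sub contDiffAt_id).sqrt hz'.ne'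
  have h_deriv : deriv (fun x ↦ √(1 - x)) z = -1 / (2 * √(1 - z)) :=
    (((hasDerivAt_id' z).const_sub 1).sqrt hz'.ne').deriv
  have h_deriv_two : iteratedDeriv 2 (fun x ↦ √(1 - x)) z = -1 / (4 * √(1 - z) ^ 3) := by
    simp [iteratedDeriv_comp_const_sub (f := (√·)), iteratedDeriv_two_sqrt hz']
  have h_leibniz : deriv (deriv fun x ↦ √(1 - x) * f x) z =
      √(1 - z) * deriv (deriv f) z + 2 * deriv (fun x ↦ √(1 - x)) z * deriv f z
        + iteratedDeriv 2 (fun x ↦ √(1 - x)) z * f z := by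
    simpa [Finset.sum_range_succ, iteratedDeriv_succ] using iteratedDeriv_fun_mul h_smooth hf
  rw [h_leibniz, h_deriv, h_deriv_two]
  ring

theorem radial_operator_sqrt_one_sub_mul (d τ : ℝ) (hz : z < 1) (hf : ContDiffAt ℝ 2 f z) :
    z * (1 - z) * deriv (deriv fun x ↦ √(1 - x) * f x) z
      + (d / 2 - d * z) * deriv (fun x ↦ √(1 - x) * f x) z
      - ((d - 1) / 4 * (d - 1 + 1 / (1 - z)) - τ) * (√(1 - z) * f z) =
    √(1 - z) * (z * (1 - z) * deriv (deriv f) z + (d / 2 - (d + 1) * z) * deriv f z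
      - (d ^ 2 / 4 - τ) * f z) := by
  rw [deriv_deriv_sqrt_one_sub_mul hz hf,
    deriv_sqrt_one_sub_mul hz (hf.differentiableAt two_ne_zero)]
  have hs : √(1 - z) ≠ 0 := (sqrt_pos.2 (sub_pos.2 hz)).ne'
  have hs_sq : √(1 - z) ^ 2 = 1 - z := sq_sqrt (sub_pos.2 hz).le
  generalize √(1 - z) = s at hs hs_sq ⊢
  obtain rfl : z = 1 - s ^ 2 := by linarith
  rw [sub_sub_cancel]
  field_simp
  ring

end SqrtConjugation

theorem discrete_eigenfunction_general (n : ℕ) (hn : 0 < n) (ν : ℝ) :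
    SatisfiesRadialHG n (((n : ℝ) / 2 + ν) ^ 2)
      (fun z ↦ √(1 - z) * ₂F₁ ((n : ℝ) + ν) (-ν) ((n : ℝ) / 2) z) (Ioo (-1) 1) := by
  intro z hz
  have hz_ball : z ∈ Metric.eball 0
      (ordinaryHypergeometricSeries ℝ ((n : ℝ) + ν) (-ν) ((n : ℝ) / 2)).radius := by
    refine Metric.eball_subset_eball (one_le_radius_ordinaryHypergeometricSeries ℝ _ _ _) ?_
    rwa [← ENNReal.ofReal_one, Metric.eball_ofReal, mem_ball_zero_iff, norm_eq_abs, abs_lt]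
  have h_smooth : ContDiffAt ℝ 2 (₂F₁ ((n : ℝ) + ν) (-ν) ((n : ℝ) / 2)) z :=
    ((hasFPowerSeriesOnBall_ordinaryHypergeometric
      (Metric.pos_of_mem_eball hz_ball)).analyticAt_of_mem hz_ball).contDiffAt
  have h_gauss := ordinaryHypergeometric_gauss_equation _ _ (fun m ↦ by positivity) hz_ball
  rw [radial_operator_sqrt_one_sub_mul _ _ hz.2 h_smooth]
  linear_combination √(1 - z) * h_gauss

theorem discrete_eigenfunction (n : ℕ) (hn : 2 ≤ n) (j : ℕ)
    (w : ℝ → ℝ)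
    (hw : ∀ z : ℝ, w z = Real.sqrt (1 - z) *
      ₂F₁ ((n : ℝ) + j) (-(j : ℝ)) ((n : ℝ) / 2) z) :
    SatisfiesRadialHG n (((n : ℝ) / 2 + j) ^ 2) w (Ioo 0 1) := by
  obtain rfl : w = _ := funext hw
  exact fun z hz ↦ discrete_eigenfunction_general n (by lia) j z ⟨by linarith [hz.1], hz.2⟩
end

section
/- Let n ≥ 2 be an integer and s > 0 a real number such that s − n/2 is not a nonnegative integer. Then the function z ↦ √(1−z) · ₂F₁(n/2 + s, n/2 − s, n/2; z) is unbounded on the interval (0,1). (Consequently, the bounded-eigenfunction condition forces the eigenvalue quantization s = n/2 + j, j ∈ ℕ, in the positive-curvature case.) -/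
open Real Set

/-!
The coefficients of `₂F₁ a b c` are quotients of Pochhammer symbols, and Euler's limit formula for
`Γ` gives `(q)_m ~ m ^ (q - 1) m! / Γ(q)`. Hence they are asymptotic to a nonzero multiple of
`m ^ (a + b - c - 1)`, that is, of the Taylor coefficients of `(1 - z) ^ (c - a - b)`. If
`a + b > c`, the latter function tends to `∞` at `1⁻`, so an Abelian comparison of power series
gives `₂F₁ a b c z ~ Γ(c) Γ(a + b - c) / (Γ(a) Γ(b)) (1 - z) ^ (c - a - b)`. For
`a, b = n / 2 ± s` and `c = n / 2` the exponent is `-n / 2 ≤ -1`, which the factor `√(1 - z)`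
cannot compensate.
-/

open Filter Topology Asymptotics
open scoped Nat

section Abelian

variable {E : Type*} [SeminormedAddCommGroup E] [NormedSpace ℝ E]

theorem norm_tsum_pow_smul_le {u : ℕ → E} {v : ℕ → ℝ} {N : ℕ} (huv : ∀ m ≥ N, ‖u m‖ ≤ v m)
    (hv : ∀ m, 0 ≤ v m) {z V : ℝ} (hz : z ∈ Icc 0 1) (hV : HasSum (fun m ↦ v m * z ^ m) V) :
    ‖∑' m, z ^ m • u m‖ ≤ ∑ m ∈ Finset.range N, ‖u m‖ + V := by
  have hhead : HasSum ((Finset.range N : Set ℕ).indicator (‖u ·‖)) (∑ m ∈ Finset.range N, ‖u m‖) :=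
    (hasSum_subtype_iff_indicator).1 (Finset.hasSum _ _)
  refine tsum_of_norm_bounded (hhead.add hV) fun m ↦ ?_
  have hzm : 0 ≤ z ^ m := pow_nonneg hz.1 m
  rw [norm_smul, norm_of_nonneg hzm]
  rcases lt_or_ge m N with hm | hm
  · rw [indicator_of_mem (by simpa using hm)]
    have : z ^ m * ‖u m‖ ≤ ‖u m‖ :=
      mul_le_of_le_one_left (norm_nonneg _) (pow_le_one₀ hz.1 hz.2)
    exact this.trans (le_add_of_nonneg_right (mul_nonneg (hv m) hzm))
  · rw [indicator_of_notMem (by simpa using hm), zero_add, mul_comm]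
    exact mul_le_mul_of_nonneg_right (huv m hm) hzm

theorem isLittleO_tsum_pow_smul {u : ℕ → E} {v : ℕ → ℝ} {V : ℝ → ℝ} (huv : u =o[atTop] v)
    (hv : ∀ m, 0 ≤ v m) (hsum : ∀ z ∈ Ioo (0 : ℝ) 1, HasSum (fun m ↦ v m * z ^ m) (V z))
    (hV : Tendsto V (𝓝[<] 1) atTop) :
    (fun z : ℝ ↦ ∑' m, z ^ m • u m) =o[𝓝[<] 1] V := by
  refine isLittleO_iff.2 fun ε hε ↦ ?_
  obtain ⟨N, hN⟩ := eventually_atTop.1 (isLittleO_iff.1 huv (half_pos hε))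
  have htail : ∀ m ≥ N, ‖u m‖ ≤ ε / 2 * v m := fun m hm ↦ by
    simpa only [norm_of_nonneg (hv m)] using hN m hm
  filter_upwards [Ioo_mem_nhdsLT one_pos,
    hV.eventually_ge_atTop ((∑ m ∈ Finset.range N, ‖u m‖) / (ε / 2))] with z hz hlarge
  rw [div_le_iff₀' (half_pos hε)] at hlarge
  calc ‖∑' m, z ^ m • u m‖
      ≤ ∑ m ∈ Finset.range N, ‖u m‖ + ε / 2 * V z :=
        norm_tsum_pow_smul_le htail (fun m ↦ mul_nonneg (half_pos hε).le (hv m))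
          (Ioo_subset_Icc_self hz) (by simpa only [mul_assoc] using (hsum z hz).mul_left (ε / 2))
    _ ≤ ε * V z := by linarith
    _ ≤ ε * ‖V z‖ := mul_le_mul_of_nonneg_left (le_norm_self _) hε.le

theorem isEquivalent_tsum_mul_pow {u v : ℕ → ℝ} {V : ℝ → ℝ} {L : ℝ} (hL : L ≠ 0)
    (huv : u ~[atTop] fun m ↦ L * v m) (hv : ∀ m, 0 ≤ v m)
    (hsum : ∀ z ∈ Ioo (0 : ℝ) 1, HasSum (fun m ↦ v m * z ^ m) (V z))
    (hV : Tendsto V (𝓝[<] 1) atTop) :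
    (fun z : ℝ ↦ ∑' m, u m * z ^ m) ~[𝓝[<] 1] fun z ↦ L * V z := by
  have hdiff : (fun m ↦ u m - L * v m) =o[atTop] v := huv.isLittleO.of_const_mul_right
  refine ((isLittleO_tsum_pow_smul hdiff hv hsum hV).const_mul_right hL).congr' ?_ .rfl
  filter_upwards [Ioo_mem_nhdsLT one_pos] with z hz
  have hu : Summable fun m ↦ u m * z ^ m :=
    summable_of_isBigO_nat ((hsum z hz).summable.mul_left L) <| by
      simpa only [mul_assoc] using huv.isBigO.mul (isBigO_refl (fun m ↦ z ^ m) atTop)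
  have hLV : HasSum (fun m ↦ L * (v m * z ^ m)) (L * V z) := (hsum z hz).mul_left L
  rw [Pi.sub_apply, ← (hu.hasSum.sub hLV).tsum_eq]
  exact tsum_congr fun m ↦ by rw [smul_eq_mul]; ring

end Abelian

theorem ascPochhammer_eval_eq_prod_range {R : Type*} [CommSemiring R] (r : R) (n : ℕ) :
    (ascPochhammer R n).eval r = ∏ j ∈ Finset.range n, (r + j) := by
  induction n with
  | zero => simp
  | succ n ih => rw [ascPochhammer_succ_eval, Finset.prod_range_succ, ih]

theorem isEquivalent_ascPochhammer_eval {s : ℝ} (hs : ∀ k : ℕ, s ≠ -k) :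
    (fun n ↦ (ascPochhammer ℝ n).eval s) ~[atTop]
      fun n : ℕ ↦ (n : ℝ) ^ (s - 1) * n ! / Gamma s := by
  have hGamma : GammaSeq s ~[atTop] fun _ ↦ Gamma s :=
    (isEquivalent_const_iff_tendsto (Gamma_ne_zero hs)).2 (GammaSeq_tendsto_Gamma s)
  have hadd : (fun n : ℕ ↦ s + n) ~[atTop] fun n ↦ (n : ℝ) :=
    IsEquivalent.refl.const_add_of_norm_tendsto_atTop
      (tendsto_norm_atTop_atTop.comp tendsto_natCast_atTop_atTop)
  have hpow : (fun n : ℕ ↦ (n : ℝ) ^ s * n !) ~[atTop] fun n ↦ (n : ℝ) ^ s * n ! := .refl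
  refine ((hpow.div (hGamma.mul hadd)).congr_left ?_).congr_right ?_
  · filter_upwards [eventually_gt_atTop 0] with n hn
    have hnum : (n : ℝ) ^ s * n ! ≠ 0 := by positivity
    have hsn : s + n ≠ 0 := fun h ↦ hs n (eq_neg_of_add_eq_zero_left h)
    simp only [Pi.div_apply, Pi.mul_apply, GammaSeq, Finset.prod_range_succ,
      ← ascPochhammer_eval_eq_prod_range]
    rw [div_mul_eq_mul_div, mul_div_mul_right _ _ hsn, div_div_cancel₀ hnum]
  · filter_upwards [eventually_gt_atTop 0] with n hn
    have hn' : (n : ℝ) ≠ 0 := mod_cast hn.ne'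
    simp only [Pi.div_apply, Pi.mul_apply, rpow_sub_one hn']
    ring

theorem hasSum_ordinaryHypergeometricCoefficient_mul_pow (a : ℝ) {b : ℝ}
    (hb : ∀ k : ℕ, b ≠ -k) {z : ℝ} (hz : |z| < 1) :
    HasSum (fun m ↦ ordinaryHypergeometricCoefficient a b b m * z ^ m) ((1 - z) ^ (-a)) := by
  have h := (one_add_rpow_hasFPowerSeriesOnBall_zero (a := -a)).hasSum (y := -z) <| by
    simpa [enorm_eq_ofReal_abs] using hz
  rw [binomialSeries_eq_ordinaryHypergeometricSeries fun k hk ↦ hb k (neg_eq_iff_eq_neg.1 hk.symm)]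
    at h
  convert! h using 1
  · ext m
    simp only [FormalMultilinearSeries.compContinuousLinearMap_apply, Function.comp_def, neg_neg,
      neg_apply, ContinuousLinearMap.id_apply, ordinaryHypergeometricSeries_apply_eq, smul_eq_mul]
  · rw [zero_add, sub_eq_add_neg]

theorem tendsto_one_sub_rpow_atTop {p : ℝ} (hp : p < 0) :
    Tendsto (fun z : ℝ ↦ (1 - z) ^ p) (𝓝[<] 1) atTop := by
  have hcont : Continuous fun z : ℝ ↦ 1 - z := by fun_prop
  refine (tendsto_rpow_neg_nhdsGT_zero hp).comp (tendsto_nhdsWithin_iff.2 ⟨?_, ?_⟩)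
  · exact tendsto_nhdsWithin_of_tendsto_nhds (hcont.tendsto' 1 0 (sub_self 1))
  · filter_upwards [self_mem_nhdsWithin] with z hz using sub_pos.2 (mem_Iio.1 hz)

theorem ne_neg_natCast_of_pos {R : Type*} [Ring R] [PartialOrder R] [IsOrderedRing R] {x : R}
    (hx : 0 < x) (k : ℕ) : x ≠ -k :=
  ((neg_nonpos.2 k.cast_nonneg).trans_lt hx).ne'

theorem ordinaryHypergeometricCoefficient_pos {𝕂 : Type*} [Field 𝕂] [LinearOrder 𝕂]
    [IsStrictOrderedRing 𝕂] {a b c : 𝕂} (ha : 0 < a) (hb : 0 < b) (hc : 0 < c) (m : ℕ) :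
    0 < ordinaryHypergeometricCoefficient a b c m := by
  have := ascPochhammer_pos m a ha
  have := ascPochhammer_pos m b hb
  have := ascPochhammer_pos m c hc
  positivity

section GaussHypergeometric

variable {a b c : ℝ}

theorem isEquivalent_ordinaryHypergeometricCoefficient
    (ha : ∀ k : ℕ, a ≠ -k) (hb : ∀ k : ℕ, b ≠ -k) (hc : ∀ k : ℕ, c ≠ -k) :
    ordinaryHypergeometricCoefficient a b c ~[atTop]
      fun n : ℕ ↦ Gamma c / (Gamma a * Gamma b) * (n : ℝ) ^ (a + b - c - 1) := by
  have hfac : (fun n : ℕ ↦ (n ! : ℝ)⁻¹) ~[atTop] fun n ↦ (n ! : ℝ)⁻¹ := .refl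
  refine (((hfac.mul (isEquivalent_ascPochhammer_eval ha)).mul
    (isEquivalent_ascPochhammer_eval hb)).mul
    (isEquivalent_ascPochhammer_eval hc).inv).congr_right ?_
  filter_upwards [eventually_gt_atTop 0] with n hn
  have hn' : (0 : ℝ) < n := Nat.cast_pos.2 hn
  have hexp : (n : ℝ) ^ (a + b - c - 1) = n ^ (a - 1) * n ^ (b - 1) / n ^ (c - 1) := by
    rw [← rpow_add hn', ← rpow_sub hn']
    ring_nf
  have : (n ! : ℝ) ≠ 0 := mod_cast n.factorial_ne_zero
  simp only [Pi.mul_apply, Pi.inv_apply, hexp]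
  field_simp

theorem Gamma_mul_Gamma_div_ne_zero {d : ℝ} (ha : ∀ k : ℕ, a ≠ -k) (hb : ∀ k : ℕ, b ≠ -k)
    (hc : ∀ k : ℕ, c ≠ -k) (hd : ∀ k : ℕ, d ≠ -k) :
    Gamma c * Gamma d / (Gamma a * Gamma b) ≠ 0 :=
  div_ne_zero (mul_ne_zero (Gamma_ne_zero hc) (Gamma_ne_zero hd))
    (mul_ne_zero (Gamma_ne_zero ha) (Gamma_ne_zero hb))

theorem isEquivalent_ordinaryHypergeometricCoefficient_one_one
    (ha : ∀ k : ℕ, a ≠ -k) (hb : ∀ k : ℕ, b ≠ -k) (hc : ∀ k : ℕ, c ≠ -k)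
    (hp : ∀ k : ℕ, a + b - c ≠ -k) :
    ordinaryHypergeometricCoefficient a b c ~[atTop] fun m ↦
      Gamma c * Gamma (a + b - c) / (Gamma a * Gamma b) *
        ordinaryHypergeometricCoefficient (a + b - c) 1 1 m := by
  have hbinom : ordinaryHypergeometricCoefficient (a + b - c) 1 1 ~[atTop]
      fun m : ℕ ↦ (Gamma (a + b - c))⁻¹ * (m : ℝ) ^ (a + b - c - 1) := by
    simpa only [Gamma_one, mul_one, add_sub_cancel_right, one_div] using
      isEquivalent_ordinaryHypergeometricCoefficient hp (ne_neg_natCast_of_pos one_pos)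
        (ne_neg_natCast_of_pos one_pos)
  have hconst : (fun _ : ℕ ↦ Gamma c * Gamma (a + b - c) / (Gamma a * Gamma b)) ~[atTop]
      fun _ ↦ Gamma c * Gamma (a + b - c) / (Gamma a * Gamma b) := .refl
  refine (isEquivalent_ordinaryHypergeometricCoefficient ha hb hc).trans
    ((hconst.mul hbinom).congr_right (.of_forall fun m ↦ ?_)).symm
  have := Gamma_ne_zero hp
  simp only [Pi.mul_apply]
  field_simp

theorem isEquivalent_ordinaryHypergeometric_nhdsLT_one
    (ha : ∀ k : ℕ, a ≠ -k) (hb : ∀ k : ℕ, b ≠ -k) (hc : ∀ k : ℕ, c ≠ -k) (hp : 0 < a + b - c) :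
    ₂F₁ a b c ~[𝓝[<] 1] fun z ↦
      Gamma c * Gamma (a + b - c) / (Gamma a * Gamma b) * (1 - z) ^ (-(a + b - c)) := by
  have hp_ne : ∀ k : ℕ, a + b - c ≠ -k := ne_neg_natCast_of_pos hp
  rw [ordinaryHypergeometric_eq_tsum]
  exact isEquivalent_tsum_mul_pow (Gamma_mul_Gamma_div_ne_zero ha hb hc hp_ne)
    (isEquivalent_ordinaryHypergeometricCoefficient_one_one ha hb hc hp_ne)
    (fun m ↦ (ordinaryHypergeometricCoefficient_pos hp one_pos one_pos m).le)
    (fun z hz ↦ hasSum_ordinaryHypergeometricCoefficient_mul_pow (a + b - c)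
      (ne_neg_natCast_of_pos one_pos) (abs_lt.2 ⟨by linarith [hz.1], hz.2⟩))
    (tendsto_one_sub_rpow_atTop (neg_neg_of_pos hp))

theorem isTheta_ordinaryHypergeometric_nhdsLT_one
    (ha : ∀ k : ℕ, a ≠ -k) (hb : ∀ k : ℕ, b ≠ -k) (hc : ∀ k : ℕ, c ≠ -k) (hp : 0 < a + b - c) :
    ₂F₁ a b c =Θ[𝓝[<] 1] fun z : ℝ ↦ (1 - z) ^ (-(a + b - c)) :=
  (isEquivalent_ordinaryHypergeometric_nhdsLT_one ha hb hc hp).isTheta.of_const_mul_right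
    (Gamma_mul_Gamma_div_ne_zero ha hb hc (ne_neg_natCast_of_pos hp))

theorem tendsto_abs_one_sub_rpow_mul_ordinaryHypergeometric_atTop
    (ha : ∀ k : ℕ, a ≠ -k) (hb : ∀ k : ℕ, b ≠ -k) (hc : ∀ k : ℕ, c ≠ -k) (hp : 0 < a + b - c)
    {r : ℝ} (hr : r < a + b - c) :
    Tendsto (fun z : ℝ ↦ |(1 - z) ^ r * ₂F₁ a b c z|) (𝓝[<] 1) atTop := by
  have htheta : (fun z : ℝ ↦ (1 - z) ^ r * ₂F₁ a b c z) =Θ[𝓝[<] 1] fun z ↦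
      (1 - z) ^ (r - (a + b - c)) := by
    refine ((isTheta_refl (fun z : ℝ ↦ (1 - z) ^ r) _).mul
      (isTheta_ordinaryHypergeometric_nhdsLT_one ha hb hc hp)).trans_eventuallyEq ?_
    filter_upwards [self_mem_nhdsWithin] with z hz
    rw [← rpow_add (sub_pos.2 (mem_Iio.1 hz)), ← sub_eq_add_neg]
  exact htheta.tendsto_norm_atTop_iff.2
    (tendsto_norm_atTop_atTop.comp (tendsto_one_sub_rpow_atTop (sub_neg.2 hr)))

end GaussHypergeometric

theorem unbounded_unless_quantized_general {a b c r : ℝ}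
    (ha : ∀ k : ℕ, a ≠ -k) (hb : ∀ k : ℕ, b ≠ -k) (hc : ∀ k : ℕ, c ≠ -k) (hp : 0 < a + b - c)
    (hr : r < a + b - c) :
    ¬ ∃ C : ℝ, ∀ z ∈ Ioo (0 : ℝ) 1, |(1 - z) ^ r * ₂F₁ a b c z| ≤ C := by
  rintro ⟨C, hC⟩
  have hlarge : ∀ᶠ z in 𝓝[<] 1, C < |(1 - z) ^ r * ₂F₁ a b c z| :=
    (tendsto_abs_one_sub_rpow_mul_ordinaryHypergeometric_atTop ha hb hc hp hr).eventually_gt_atTop C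
  obtain ⟨z, hCz, hz⟩ := (hlarge.and (Ioo_mem_nhdsLT one_pos)).exists
  exact (hC z hz).not_gt hCz

theorem unbounded_unless_quantized (n : ℕ) (hn : 2 ≤ n) (s : ℝ) (hs : 0 < s)
    (hquant : ∀ j : ℕ, s - (n : ℝ) / 2 ≠ j) :
    ¬ ∃ C : ℝ, ∀ z ∈ Ioo (0 : ℝ) 1,
      |Real.sqrt (1 - z) * ₂F₁ ((n : ℝ) / 2 + s) ((n : ℝ) / 2 - s) ((n : ℝ) / 2) z| ≤ C := by
  have hn' : (2 : ℝ) ≤ n := mod_cast hn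
  simp_rw [sqrt_eq_rpow]
  exact unbounded_unless_quantized_general (ne_neg_natCast_of_pos (by linarith))
    (fun k h ↦ hquant k (by linarith)) (ne_neg_natCast_of_pos (by linarith))
    (by linarith) (by linarith)
end

section
/- Let n ≥ 2 be an integer and define, for z < 0, p(z) := (z(z−1))^{n−1}, ω(z) := (z(z−1))^{n/2−1} (real powers, well defined since z(z−1) > 0 for z < 0) and q(z) := −((n−1)/4)·(n−1 + 1/(1−z)). Then for every z < 0 one has q(z) + (1/4)·[ (1/ω(z))·(d/dz)( p'(z)/ω(z) ) − p'(z)²/(4·ω(z)²·p(z)) ] = (n−1)(n+4z−3)/(16·z·(z−1)), and this expression tends to 0 as z → −∞. -/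
open Real Set Filter

/-!
For a power-law pair `p = u ^ α`, `ω = u ^ β`, every term of the Liouville potential is a multiple
of `u ^ (α - 2 * β - 2)`. Here `u = z * (z - 1)`, `α = n - 1` and `β = n / 2 - 1`, so this power is
`u⁻¹`; since `u'' = 2` and `u' ^ 2 = 4 * u + 1`, what remains is the constant `(n - 1) ^ 2 / 4`,
which `q` cancels, plus terms that vanish at infinity.
-/

/-- The potential which Liouville's transformation adds to the operator
`f ↦ -((p / ω) f')' / ω`, with weight `ω` and leading coefficient `p / ω`: in the
variable `x` with `dx = (ω / √p) dz` it is `p ^ (-1 / 4) * (d / dx) ^ 2 (p ^ (1 / 4))`. -/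
noncomputable def liouvillePotential (p ω : ℝ → ℝ) (z : ℝ) : ℝ :=
  (1 / 4) * ((1 / ω z) * deriv (fun y => deriv p y / ω y) z
    - (deriv p z) ^ 2 / (4 * (ω z) ^ 2 * p z))

section PowerLaw

variable {u : ℝ → ℝ} {z : ℝ}

theorem deriv_rpow_div_rpow {u' : ℝ} (hu : HasDerivAt u u' z) (hpos : 0 < u z) (α β : ℝ) :
    deriv (fun y => u y ^ α) z / u z ^ β = α * (u' * u z ^ (α - 1 - β)) := by
  rw [(hu.rpow_const (Or.inl hpos.ne')).deriv, rpow_sub hpos (α - 1) β]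
  ring

variable {u' : ℝ → ℝ} {u'' : ℝ}

theorem deriv_deriv_rpow_div_rpow (hu : ∀ᶠ y in nhds z, HasDerivAt u (u' y) y)
    (hu' : HasDerivAt u' u'' z) (hpos : 0 < u z) (α β : ℝ) :
    deriv (fun y => deriv (fun x => u x ^ α) y / u y ^ β) z
      = α * ((α - 1 - β) * u' z ^ 2 + u z * u'') * u z ^ (α - β - 2) := by
  have hu_z : HasDerivAt u (u' z) z := hu.self_of_nhds
  have near : (fun y => deriv (fun x => u x ^ α) y / u y ^ β)
      =ᶠ[nhds z] fun y => α * (u' y * u y ^ (α - 1 - β)) := by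
    filter_upwards [hu, hu_z.continuousAt.eventually_const_lt hpos] with y hy hy_pos
    exact deriv_rpow_div_rpow hy hy_pos α β
  have rpow_succ : u z ^ (α - 1 - β) = u z ^ (α - β - 2) * u z := by
    rw [← rpow_add_one hpos.ne']
    ring_nf
  have rpow_pred : u z ^ (α - 1 - β - 1) = u z ^ (α - β - 2) := by ring_nf
  have hderiv := (hu'.mul (hu_z.rpow_const (p := α - 1 - β) (Or.inl hpos.ne'))).const_mul α
  rw [rpow_succ, rpow_pred] at hderiv
  exact near.deriv_eq.trans (hderiv.deriv.trans (by ring))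

theorem liouvillePotential_rpow (hu : ∀ᶠ y in nhds z, HasDerivAt u (u' y) y)
    (hu' : HasDerivAt u' u'' z) (hpos : 0 < u z) (α β : ℝ) :
    liouvillePotential (fun y => u y ^ α) (fun y => u y ^ β) z
      = α / 4 * ((3 * α / 4 - 1 - β) * u' z ^ 2 + u z * u'') * u z ^ (α - 2 * β - 2) := by
  have inv_mul_rpow : 1 / u z ^ β * u z ^ (α - β - 2) = u z ^ (α - 2 * β - 2) := by
    rw [one_div, ← rpow_neg hpos.le, ← rpow_add hpos]
    ring_nf
  have sq_rpow_div : (u z ^ (α - 1 - β)) ^ 2 / u z ^ α = u z ^ (α - 2 * β - 2) := by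
    rw [← rpow_mul_natCast hpos.le, ← rpow_sub hpos]
    push_cast
    ring_nf
  have sq_deriv_div : deriv (fun y => u y ^ α) z ^ 2 / (4 * (u z ^ β) ^ 2 * u z ^ α)
      = α ^ 2 / 4 * u' z ^ 2 * u z ^ (α - 2 * β - 2) := by
    calc _ = (deriv (fun y => u y ^ α) z / u z ^ β) ^ 2 / u z ^ α / 4 := by field_simp
      _ = _ := by
        rw [deriv_rpow_div_rpow hu.self_of_nhds hpos, ← sq_rpow_div]
        ring
  rw [liouvillePotential, deriv_deriv_rpow_div_rpow hu hu' hpos, sq_deriv_div, ← inv_mul_rpow]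
  ring

end PowerLaw

theorem liouvillePotential_mul_sub_one_rpow (n : ℝ) {z : ℝ} (hz : 0 < z * (z - 1)) :
    liouvillePotential (fun y => (y * (y - 1)) ^ (n - 1)) (fun y => (y * (y - 1)) ^ (n / 2 - 1)) z
      = (n - 1) / 4 * (n - 1 + (n - 3) / (4 * (z * (z - 1)))) := by
  have hu (y : ℝ) : HasDerivAt (fun x => x * (x - 1)) (2 * y - 1) y :=
    ((hasDerivAt_id' y).mul ((hasDerivAt_id' y).sub_const 1)).congr_deriv (by ring)
  have hu' : HasDerivAt (fun y : ℝ => 2 * y - 1) 2 z := by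
    simpa using ((hasDerivAt_id z).const_mul 2).sub_const 1
  have discriminant : (2 * z - 1) ^ 2 = 4 * (z * (z - 1)) + 1 := by ring
  rw [liouvillePotential_rpow (.of_forall hu) hu' hz,
    show n - 1 - 2 * (n / 2 - 1) - 2 = -1 by ring, rpow_neg_one, discriminant]
  generalize z * (z - 1) = u at hz ⊢
  field_simp
  ring

theorem tendsto_linear_div_quadratic_cobounded {𝕜 : Type*} [NormedField 𝕜] (a b c d : 𝕜) :
    Tendsto (fun z => (a * z + b) / ((z - c) * (z - d))) (Bornology.cobounded 𝕜) (nhds 0) := by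
  have inv_sub (e : 𝕜) : Tendsto (fun z => (z - e)⁻¹) (Bornology.cobounded 𝕜) (nhds 0) :=
    tendsto_inv₀_cobounded.comp (tendsto_sub_const_cobounded e)
  have lim : Tendsto (fun z => (a + (a * c + b) * (z - c)⁻¹) * (z - d)⁻¹)
      (Bornology.cobounded 𝕜) (nhds 0) := by
    simpa using (((inv_sub c).const_mul (a * c + b)).const_add a).mul (inv_sub d)
  refine lim.congr' ?_
  filter_upwards [Bornology.eventually_ne_cobounded c, Bornology.eventually_ne_cobounded d]
    with z hc hd
  have hzc := sub_ne_zero.2 hc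
  have hzd := sub_ne_zero.2 hd
  field_simp
  ring

theorem effective_potential_decay_general (n : ℝ) (p ω q : ℝ → ℝ)
    (hp : ∀ z : ℝ, p z = (z * (z - 1)) ^ (n - 1))
    (hω : ∀ z : ℝ, ω z = (z * (z - 1)) ^ (n / 2 - 1))
    (hq : ∀ z : ℝ, q z = -((n - 1) / 4) * (n - 1 + 1 / (1 - z))) :
    (∀ z : ℝ, 0 < z * (z - 1) →
      q z + liouvillePotential p ω z = (n - 1) * (n + 4 * z - 3) / (16 * z * (z - 1))) ∧
    Tendsto (fun z : ℝ => (n - 1) * (n + 4 * z - 3) / (16 * z * (z - 1)))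
      (Bornology.cobounded ℝ) (nhds 0) := by
  obtain rfl := funext hp
  obtain rfl := funext hω
  refine ⟨fun z hz => ?_, ?_⟩
  · have hz₀ : z ≠ 0 := left_ne_zero_of_mul hz.ne'
    have hz₁ : z - 1 ≠ 0 := right_ne_zero_of_mul hz.ne'
    rw [hq, liouvillePotential_mul_sub_one_rpow n hz, ← neg_sub z 1]
    field_simp
    ring
  · refine (tendsto_linear_div_quadratic_cobounded
      ((n - 1) / 4) ((n - 1) * (n - 3) / 16) 0 1).congr fun z => ?_
    rw [sub_zero, mul_assoc 16, ← div_div _ 16]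
    ring

theorem effective_potential_decay (n : ℕ) (hn : 2 ≤ n)
    (p ω q : ℝ → ℝ)
    (hp : ∀ z : ℝ, p z = (z * (z - 1)) ^ ((n : ℝ) - 1))
    (hω : ∀ z : ℝ, ω z = (z * (z - 1)) ^ ((n : ℝ) / 2 - 1))
    (hq : ∀ z : ℝ, q z = -(((n : ℝ) - 1) / 4) * ((n : ℝ) - 1 + 1 / (1 - z))) :
    (∀ z : ℝ, z < 0 →
      q z + (1 / 4) * ((1 / ω z) * deriv (fun y => deriv p y / ω y) z
          - (deriv p z) ^ 2 / (4 * (ω z) ^ 2 * p z))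
        = ((n : ℝ) - 1) * ((n : ℝ) + 4 * z - 3) / (16 * z * (z - 1))) ∧
    Tendsto (fun z : ℝ => ((n : ℝ) - 1) * ((n : ℝ) + 4 * z - 3) / (16 * z * (z - 1)))
      atBot (nhds 0) := by
  obtain ⟨formula, decay⟩ := effective_potential_decay_general n p ω q hp hω hq
  exact ⟨fun z hz => formula z (mul_pos_of_neg_of_neg hz (by linarith)),
    decay.mono_left IsOrderBornology.atBot_le_cobounded⟩
end
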